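/- For every integer k ≥ 3 there exists a constant C(k) > 0 depending only on k such that for every n ≥ 2 and every n×n real matrix A with σ_A > 0: | E(𝒯_A^k) − ∫_ℝ x^k ψ(x) dx | ≤ C(k)·( β_A/n + (1/n)·Σ_{i,j=1}^{n} |â_{ij}|^k ). -/

import Mathlib

open Finset MeasureTheory

/-- Density of the standard normal distribution. -/
noncomputable def gaussD (x : ℝ) : ℝ := (Real.sqrt (2 * Real.pi))⁻¹ * Real.exp (-(x ^ 2) / 2)

/-- Distribution function of the standard normal distribution. -/
noncomputable def gaussCDF (x : ℝ) : ℝ := ∫ t in Set.Iic x, gaussD t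

section RankDefs

variable {m : ℕ}

/-- Row mean `a_{i·}`. -/
noncomputable def rowMean (A : Matrix (Fin m) (Fin m) ℝ) (i : Fin m) : ℝ := (∑ j, A i j) / (m : ℝ)

/-- Column mean `a_{·j}`. -/
noncomputable def colMean (A : Matrix (Fin m) (Fin m) ℝ) (j : Fin m) : ℝ := (∑ i, A i j) / (m : ℝ)

/-- Grand mean `a_{··}`. -/
noncomputable def totMean (A : Matrix (Fin m) (Fin m) ℝ) : ℝ := (∑ i, ∑ j, A i j) / (m : ℝ) ^ 2

/-- Centered entries `a_{ij} − a_{i·} − a_{·j} + a_{··}`. -/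
noncomputable def ctr (A : Matrix (Fin m) (Fin m) ℝ) (i j : Fin m) : ℝ :=
  A i j - rowMean A i - colMean A j + totMean A

/-- `σ_A²`. -/
noncomputable def sigma2 (A : Matrix (Fin m) (Fin m) ℝ) : ℝ :=
  (∑ i, ∑ j, ctr A i j ^ 2) / ((m : ℝ) - 1)

/-- `σ_A`. -/
noncomputable def sdev (A : Matrix (Fin m) (Fin m) ℝ) : ℝ := Real.sqrt (sigma2 A)

/-- Standardized matrix `Â = (â_{ij})`. -/
noncomputable def hatM (A : Matrix (Fin m) (Fin m) ℝ) : Matrix (Fin m) (Fin m) ℝ :=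
  fun i j => ctr A i j / sdev A

/-- `μ_A = n·a_{··}`. -/
noncomputable def muM (A : Matrix (Fin m) (Fin m) ℝ) : ℝ := (m : ℝ) * totMean A

/-- The linear rank statistic `T_A(π) = Σ_i a_{iπ(i)}`. -/
noncomputable def rankT (A : Matrix (Fin m) (Fin m) ℝ) (π : Equiv.Perm (Fin m)) : ℝ :=
  ∑ i, A i (π i)

/-- Expectation with respect to the uniform distribution on permutations. -/
noncomputable def permExp (f : Equiv.Perm (Fin m) → ℝ) : ℝ :=
  (∑ π : Equiv.Perm (Fin m), f π) / (Nat.factorial m : ℝ)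

/-- The standardized rank statistic `𝒯_A = (T_A − μ_A)/σ_A`. -/
noncomputable def rankTstd (A : Matrix (Fin m) (Fin m) ℝ) (π : Equiv.Perm (Fin m)) : ℝ :=
  (rankT A π - muM A) / sdev A

/-- `F_A`, the distribution function of `T_A`. -/
noncomputable def Fr (A : Matrix (Fin m) (Fin m) ℝ) (z : ℝ) : ℝ :=
  permExp (fun π => if rankT A π ≤ z then (1 : ℝ) else 0)

/-- `ℱ_A`, the distribution function of `𝒯_A`. -/
noncomputable def Fstd (A : Matrix (Fin m) (Fin m) ℝ) (z : ℝ) : ℝ :=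
  permExp (fun π => if rankTstd A π ≤ z then (1 : ℝ) else 0)

/-- `β_A = Σ_{i,j} |â_{ij}|³`. -/
noncomputable def betaM (A : Matrix (Fin m) (Fin m) ℝ) : ℝ := ∑ i, ∑ j, |hatM A i j| ^ 3

/-- `δ_A = Σ_{i,j} |â_{ij}|⁴`. -/
noncomputable def deltaM (A : Matrix (Fin m) (Fin m) ℝ) : ℝ := ∑ i, ∑ j, |hatM A i j| ^ 4

/-- `η_A = Σ_{i,j} |â_{ij}|⁵`. -/
noncomputable def etaM (A : Matrix (Fin m) (Fin m) ℝ) : ℝ := ∑ i, ∑ j, |hatM A i j| ^ 5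

/-- `D_A = (δ_A/n)^{1/2}`. -/
noncomputable def DM (A : Matrix (Fin m) (Fin m) ℝ) : ℝ := Real.sqrt (deltaM A / (m : ℝ))

/-- `E_A = (η_A/n)^{1/3}`. -/
noncomputable def EM (A : Matrix (Fin m) (Fin m) ℝ) : ℝ := (etaM A / (m : ℝ)) ^ ((1 : ℝ) / 3)

/-- `λ_{1,A} = (1/n)Σ_{i,j} â_{ij}³`. -/
noncomputable def lam1 (A : Matrix (Fin m) (Fin m) ℝ) : ℝ := (∑ i, ∑ j, hatM A i j ^ 3) / (m : ℝ)

/-- `λ_{2,A}`. -/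
noncomputable def lam2 (A : Matrix (Fin m) (Fin m) ℝ) : ℝ :=
  (∑ i, ∑ j, hatM A i j ^ 4) / (m : ℝ) + 3 / (m : ℝ)
    - 3 / (m : ℝ) ^ 2 *
        ∑ i, ∑ j, ∑ k, (hatM A i j ^ 2 * hatM A i k ^ 2 + hatM A i j ^ 2 * hatM A k j ^ 2)

/-- First-order Edgeworth expansion `e_{1,A}`. -/
noncomputable def edge1 (A : Matrix (Fin m) (Fin m) ℝ) (x : ℝ) : ℝ :=
  gaussCDF x - gaussD x * (lam1 A / 6) * (x ^ 2 - 1)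

/-- Second-order Edgeworth expansion `e_{2,A}`. -/
noncomputable def edge2 (A : Matrix (Fin m) (Fin m) ℝ) (x : ℝ) : ℝ :=
  gaussCDF x - gaussD x *
    (lam1 A / 6 * (x ^ 2 - 1) + lam2 A / 24 * (x ^ 3 - 3 * x)
      + lam1 A ^ 2 / 72 * (x ^ 5 - 10 * x ^ 3 + 15 * x))

/-- `k`-th iterated difference `Δ_y^k G`. -/
noncomputable def Δiter (y : ℝ) (k : ℕ) (G : ℝ → ℝ) : ℝ → ℝ :=
  (fun (G : ℝ → ℝ) (z : ℝ) => G (z + y) - G z)^[k] G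

/-- The interpolating polynomial `P_y^k(x; z, F)` of `F` at the points `z, z+y, …, z+ky`. -/
noncomputable def interp (y : ℝ) (k : ℕ) (z : ℝ) (F : ℝ → ℝ) (x : ℝ) : ℝ :=
  F z + ∑ s ∈ Finset.Icc 1 k,
    Δiter y s F z * ∏ i ∈ Finset.Icc 1 s, (x - z - ((i : ℝ) - 1) * y) / ((i : ℝ) * y)

end RankDefs

section PermExp

variable {n : ℕ}

lemma pe_add (f g : Equiv.Perm (Fin n) → ℝ) :
    permExp (fun π => f π + g π) = permExp f + permExp g := by
  simp [permExp, Finset.sum_add_distrib, add_div]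

lemma pe_mul (c : ℝ) (f : Equiv.Perm (Fin n) → ℝ) :
    permExp (fun π => c * f π) = c * permExp f := by
  simp [permExp, ← Finset.mul_sum, mul_div_assoc]

lemma pe_const (c : ℝ) : permExp (fun _ : Equiv.Perm (Fin n) => c) = c := by
  have : (Nat.factorial n : ℝ) ≠ 0 := by exact_mod_cast Nat.factorial_ne_zero n
  simp [permExp, Fintype.card_perm]
  field_simp

lemma pe_mono {f g : Equiv.Perm (Fin n) → ℝ} (h : ∀ π, f π ≤ g π) : permExp f ≤ permExp g := by
  unfold permExp
  gcongr with π _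
  exact h π

lemma pe_nonneg {f : Equiv.Perm (Fin n) → ℝ} (h : ∀ π, 0 ≤ f π) : 0 ≤ permExp f := by
  have := pe_mono (f := fun _ => 0) h
  rwa [pe_const] at this

lemma pe_abs (f : Equiv.Perm (Fin n) → ℝ) : |permExp f| ≤ permExp (fun π => |f π|) := by
  rw [abs_le]
  constructor
  · have := pe_mono (f := fun π => (-1) * |f π|) (g := f) (fun π => by
      have := neg_abs_le (f π); linarith)
    rw [pe_mul] at this
    linarith
  · exact pe_mono (fun π => le_abs_self _)

lemma pe_sum {ι : Type*} (s : Finset ι) (f : ι → Equiv.Perm (Fin n) → ℝ) :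
    permExp (fun π => ∑ i ∈ s, f i π) = ∑ i ∈ s, permExp (f i) := by
  unfold permExp
  rw [Finset.sum_comm, Finset.sum_div]

lemma pe_swap (i j : Fin n) (f : Equiv.Perm (Fin n) → ℝ) :
    permExp f = permExp (fun π => f (π * Equiv.swap i j)) := by
  unfold permExp
  congr 1
  exact (Equiv.sum_comp (Equiv.mulRight (Equiv.swap i j)) f).symm

/-- change of the statistic under a transposition -/
noncomputable def DD (a : Matrix (Fin n) (Fin n) ℝ) (π : Equiv.Perm (Fin n)) (i j : Fin n) : ℝ :=
  a i (π j) + a j (π i) - a i (π i) - a j (π j)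

noncomputable def RR (a : Matrix (Fin n) (Fin n) ℝ) (π : Equiv.Perm (Fin n)) (i j : Fin n) : ℝ :=
  |a i (π j)| + |a j (π i)| + |a i (π i)| + |a j (π j)|

noncomputable def SS (a : Matrix (Fin n) (Fin n) ℝ) (d : ℕ) : ℝ := (∑ i, ∑ j, |a i j| ^ d) / (n : ℝ)

noncomputable def MM (a : Matrix (Fin n) (Fin n) ℝ) (r : ℕ) : ℝ := permExp (fun π => |rankT a π| ^ r)

noncomputable def KK (a : Matrix (Fin n) (Fin n) ℝ) (d r : ℕ) : ℝ :=
  permExp (fun π => (∑ i, ∑ j, RR a π i j ^ d * |rankT a π| ^ r) / (n : ℝ))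

structure Good (a : Matrix (Fin n) (Fin n) ℝ) : Prop where
  hn : 2 ≤ n
  row : ∀ i, ∑ j, a i j = 0
  col : ∀ j, ∑ i, a i j = 0
  sq : ∑ i, ∑ j, a i j ^ 2 = (n : ℝ) - 1

lemma rankT_swap (a : Matrix (Fin n) (Fin n) ℝ) (π : Equiv.Perm (Fin n)) (i j : Fin n) :
    rankT a (π * Equiv.swap i j) = rankT a π + DD a π i j := by
  unfold rankT DD
  by_cases hij : i = j
  · subst hij; simp
  have h : ∀ f : Fin n → ℝ, ∑ k, f k = f i + f j + ∑ k ∈ (Finset.univ.erase i).erase j, f k := by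
    intro f
    rw [← Finset.add_sum_erase _ _ (Finset.mem_univ i),
      ← Finset.add_sum_erase _ _ (Finset.mem_erase.2 ⟨Ne.symm hij, Finset.mem_univ j⟩)]
    ring
  rw [h, h (fun k => a k (π k))]
  have : ∑ k ∈ (Finset.univ.erase i).erase j, a k ((π * Equiv.swap i j) k)
      = ∑ k ∈ (Finset.univ.erase i).erase j, a k (π k) := by
    refine Finset.sum_congr rfl fun k hk => ?_
    simp only [Finset.mem_erase, Finset.mem_univ, and_true] at hk
    simp [Equiv.swap_apply_of_ne_of_ne hk.2 hk.1]
  rw [this]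
  simp
  ring

lemma swap1 (hn : 2 ≤ n) (a : Matrix (Fin n) (Fin n) ℝ) (h : ℝ → ℝ → ℝ) :
    permExp (fun π => ∑ i, h (a i (π i)) (rankT a π)) =
      permExp (fun π => (∑ i, ∑ j, h (a i (π j)) (rankT a π + DD a π i j)) / (n : ℝ)) := by
  have hn' : (n : ℝ) ≠ 0 := by positivity
  have e : ∀ i j, permExp (fun π => h (a i (π i)) (rankT a π)) =
      permExp (fun π => h (a i (π j)) (rankT a π + DD a π i j)) := by
    intro i j
    rw [pe_swap i j]
    simp [rankT_swap]
  simp only [div_eq_inv_mul, pe_mul, pe_sum]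
  simp only [← e]
  simp [← Finset.mul_sum]
  field_simp

lemma swap2 (a : Matrix (Fin n) (Fin n) ℝ) (h : ℝ → ℝ → ℝ → ℝ) :
    permExp (fun π => ∑ i, ∑ j, h (a i (π j)) (a j (π i)) (rankT a π)) =
      permExp (fun π => ∑ i, ∑ j, h (a i (π i)) (a j (π j)) (rankT a π + DD a π i j)) := by
  simp only [pe_sum]
  refine Finset.sum_congr rfl fun i _ => Finset.sum_congr rfl fun j _ => ?_
  rw [pe_swap i j]
  simp [rankT_swap]

/-- reindexing of columns -/
lemma sum_perm (a : Matrix (Fin n) (Fin n) ℝ) (π : Equiv.Perm (Fin n)) (h : ℝ → ℝ) :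
    ∑ i, ∑ j, h (a i (π j)) = ∑ i, ∑ j, h (a i j) := by
  refine Finset.sum_congr rfl fun i _ => ?_
  exact Equiv.sum_comp π (fun j => h (a i j))

lemma SS_nonneg (a : Matrix (Fin n) (Fin n) ℝ) (d : ℕ) : 0 ≤ SS a d := by
  unfold SS; positivity

lemma MM_nonneg (a : Matrix (Fin n) (Fin n) ℝ) (d : ℕ) : 0 ≤ MM a d :=
  pe_nonneg fun _ => by positivity

lemma RR_nonneg (a : Matrix (Fin n) (Fin n) ℝ) (π : Equiv.Perm (Fin n)) (i j : Fin n) :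
    0 ≤ RR a π i j := by unfold RR; positivity

lemma DD_le (a : Matrix (Fin n) (Fin n) ℝ) (π : Equiv.Perm (Fin n)) (i j : Fin n) :
    |DD a π i j| ≤ RR a π i j := by
  unfold DD RR
  rw [abs_le]
  constructor <;>
  linarith [neg_abs_le (a i (π j)), neg_abs_le (a j (π i)), neg_abs_le (a i (π i)),
    neg_abs_le (a j (π j)), le_abs_self (a i (π j)), le_abs_self (a j (π i)),
    le_abs_self (a i (π i)), le_abs_self (a j (π j))]

lemma four_pow {x y z w : ℝ} (hx : 0 ≤ x) (hy : 0 ≤ y) (hz : 0 ≤ z) (hw : 0 ≤ w) (d : ℕ) :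
    (x + y + z + w) ^ d ≤ 4 ^ d * (x ^ d + y ^ d + z ^ d + w ^ d) := by
  have key : ∀ m : ℝ, 0 ≤ m → x ≤ m → y ≤ m → z ≤ m → w ≤ m →
      (x + y + z + w) ^ d ≤ 4 ^ d * m ^ d := by
    intro m hm h1 h2 h3 h4
    rw [← mul_pow]
    exact pow_le_pow_left₀ (by positivity) (by linarith) d
  have px := pow_nonneg hx d
  have py := pow_nonneg hy d
  have pz := pow_nonneg hz d
  have pw := pow_nonneg hw d
  rcases le_total x y with h1 | h1 <;> rcases le_total z w with h2 | h2
  · rcases le_total y w with h3 | h3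
    · refine (key w hw (by linarith) (by linarith) (by linarith) le_rfl).trans ?_
      gcongr; linarith
    · refine (key y hy (by linarith) (by linarith) (by linarith) (by linarith)).trans ?_
      gcongr; linarith
  · rcases le_total y z with h3 | h3
    · refine (key z hz (by linarith) (by linarith) (by linarith) (by linarith)).trans ?_
      gcongr; linarith
    · refine (key y hy (by linarith) (by linarith) (by linarith) (by linarith)).trans ?_
      gcongr; linarith
  · rcases le_total x w with h3 | h3
    · refine (key w hw (by linarith) (by linarith) (by linarith) le_rfl).trans ?_
      gcongr; linarith
    · refine (key x hx (by linarith) (by linarith) (by linarith) (by linarith)).trans ?_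
      gcongr; linarith
  · rcases le_total x z with h3 | h3
    · refine (key z hz (by linarith) (by linarith) (by linarith) (by linarith)).trans ?_
      gcongr; linarith
    · refine (key x hx (by linarith) (by linarith) (by linarith) (by linarith)).trans ?_
      gcongr; linarith

lemma two_pow {x y : ℝ} (hx : 0 ≤ x) (hy : 0 ≤ y) (d : ℕ) :
    (x + y) ^ d ≤ 2 ^ d * (x ^ d + y ^ d) := by
  have px := pow_nonneg hx d
  have py := pow_nonneg hy d
  rcases le_total x y with h | h
  · calc (x + y) ^ d ≤ (2 * y) ^ d := pow_le_pow_left₀ (by positivity) (by linarith) d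
      _ ≤ _ := by rw [mul_pow]; gcongr; linarith
  · calc (x + y) ^ d ≤ (2 * x) ^ d := pow_le_pow_left₀ (by positivity) (by linarith) d
      _ ≤ _ := by rw [mul_pow]; gcongr; linarith

/-- pointwise bound for sums of powers of `RR` -/
lemma RR_sum (hn : 2 ≤ n) (a : Matrix (Fin n) (Fin n) ℝ) (π : Equiv.Perm (Fin n)) (d : ℕ) :
    (∑ i, ∑ j, RR a π i j ^ d) / (n : ℝ) ≤ 4 ^ d * (2 * SS a d + 2 * ∑ i, |a i (π i)| ^ d) := by
  have hn' : (0 : ℝ) < n := by positivity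
  have h1 : ∑ i, ∑ j, RR a π i j ^ d ≤ ∑ i, ∑ j, 4 ^ d * (|a i (π j)| ^ d + |a j (π i)| ^ d
      + |a i (π i)| ^ d + |a j (π j)| ^ d) :=
    Finset.sum_le_sum fun i _ => Finset.sum_le_sum fun j _ =>
      four_pow (abs_nonneg _) (abs_nonneg _) (abs_nonneg _) (abs_nonneg _) d
  rw [div_le_iff₀ hn']
  refine h1.trans (le_of_eq ?_)
  simp only [← Finset.mul_sum, Finset.sum_add_distrib]
  have e1 := sum_perm a π (fun x => |x| ^ d)
  have e2 : ∑ i, ∑ j, |a j (π i)| ^ d = ∑ i, ∑ j, |a i j| ^ d := by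
    rw [Finset.sum_comm]; exact e1
  rw [e1, e2]
  unfold SS
  simp [← Finset.mul_sum]
  field_simp
  ring

lemma E_diag (hn : 2 ≤ n) (a : Matrix (Fin n) (Fin n) ℝ) (d : ℕ) :
    permExp (fun π => ∑ i, |a i (π i)| ^ d) = SS a d := by
  rw [swap1 hn a (fun x _ => |x| ^ d)]
  have : ∀ π : Equiv.Perm (Fin n), (∑ i, ∑ j, |a i (π j)| ^ d) / (n : ℝ) = SS a d := by
    intro π
    have := sum_perm a π (fun x => |x| ^ d)
    rw [this, SS]
  simp only [this, pe_const]

lemma KK_zero (hn : 2 ≤ n) (a : Matrix (Fin n) (Fin n) ℝ) (d : ℕ) :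
    KK a d 0 ≤ 4 ^ d * 4 * SS a d := by
  unfold KK
  refine (pe_mono (g := fun π => 4 ^ d * (2 * SS a d + 2 * ∑ i, |a i (π i)| ^ d))
    fun π => by simpa using RR_sum hn a π d).trans (le_of_eq ?_)
  rw [pe_mul, pe_add, pe_const, pe_mul, E_diag hn]
  ring

lemma ED_le (hn : 2 ≤ n) (a : Matrix (Fin n) (Fin n) ℝ) (d r : ℕ) :
    permExp (fun π => ∑ i, |a i (π i)| ^ d * |rankT a π| ^ r) ≤
      2 ^ r * (SS a d * MM a r + 4 ^ (d + r) * 4 * SS a (d + r)) := by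
  rw [swap1 hn a (fun x t => |x| ^ d * |t| ^ r)]
  have hn' : (0 : ℝ) < n := by positivity
  have h1 : ∀ π : Equiv.Perm (Fin n),
      (∑ i, ∑ j, |a i (π j)| ^ d * |rankT a π + DD a π i j| ^ r) / (n : ℝ) ≤
      2 ^ r * (SS a d * |rankT a π| ^ r + (∑ i, ∑ j, RR a π i j ^ (d + r)) / (n : ℝ)) := by
    intro π
    have h2 : ∀ i j, |a i (π j)| ^ d * |rankT a π + DD a π i j| ^ r ≤
        2 ^ r * (|a i (π j)| ^ d * |rankT a π| ^ r + RR a π i j ^ (d + r)) := by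
      intro i j
      have hx : |a i (π j)| ≤ RR a π i j := by
        unfold RR
        linarith [abs_nonneg (a j (π i)), abs_nonneg (a i (π i)), abs_nonneg (a j (π j))]
      calc |a i (π j)| ^ d * |rankT a π + DD a π i j| ^ r
          ≤ |a i (π j)| ^ d * (|rankT a π| + RR a π i j) ^ r := by
            gcongr
            exact (abs_add_le _ _).trans (by linarith [DD_le a π i j])
        _ ≤ |a i (π j)| ^ d * (2 ^ r * (|rankT a π| ^ r + RR a π i j ^ r)) := by
            gcongr
            exact two_pow (abs_nonneg _) (RR_nonneg _ _ _ _) r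
        _ = 2 ^ r * (|a i (π j)| ^ d * |rankT a π| ^ r + |a i (π j)| ^ d * RR a π i j ^ r) := by ring
        _ ≤ _ := by
            rw [pow_add]
            have := RR_nonneg a π i j
            gcongr
    have h3 := Finset.sum_le_sum fun i (_ : i ∈ Finset.univ) => Finset.sum_le_sum
      fun j (_ : j ∈ Finset.univ) => h2 i j
    have e1 := sum_perm a π (fun x => |x| ^ d)
    simp only [← Finset.mul_sum, Finset.sum_add_distrib, ← Finset.sum_mul, e1] at h3
    rw [div_le_iff₀ hn']
    refine h3.trans (le_of_eq ?_)
    unfold SS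
    field_simp
  refine (pe_mono h1).trans ?_
  rw [pe_mul, pe_add, pe_mul]
  have := KK_zero hn a (d + r)
  unfold KK at this
  simp only [pow_zero, mul_one] at this
  unfold MM
  gcongr

lemma KK_le (hn : 2 ≤ n) (a : Matrix (Fin n) (Fin n) ℝ) (d r : ℕ) :
    KK a d r ≤ 4 ^ d * (2 + 2 * 2 ^ r * (1 + 4 ^ (d + r) * 4)) * (SS a d * MM a r + SS a (d + r)) := by
  have h1 : KK a d r ≤ permExp (fun π => 4 ^ d * (2 * SS a d * |rankT a π| ^ r +
      2 * ∑ i, |a i (π i)| ^ d * |rankT a π| ^ r)) := by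
    refine pe_mono fun π => ?_
    have := mul_le_mul_of_nonneg_right (RR_sum hn a π d) (pow_nonneg (abs_nonneg (rankT a π)) r)
    simp only [← Finset.sum_mul]
    calc _ = (∑ i, ∑ j, RR a π i j ^ d) / (n : ℝ) * |rankT a π| ^ r := by ring
      _ ≤ _ := this
      _ = _ := by ring
  refine h1.trans ?_
  rw [pe_mul, pe_add, pe_mul, pe_mul]
  have h2 := ED_le hn a d r
  have h3 : permExp (fun π => |rankT a π| ^ r) = MM a r := rfl
  rw [h3, mul_assoc (4 ^ d)]
  have p1 : 0 ≤ SS a d * MM a r := mul_nonneg (SS_nonneg _ _) (MM_nonneg _ _)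
  have p2 := SS_nonneg a (d + r)
  have q1 : (0:ℝ) ≤ 2 ^ r * (SS a d * MM a r) * (4 ^ (d + r) * 4) := by positivity
  have q2 : (0:ℝ) ≤ 2 ^ r * SS a (d + r) := by positivity
  refine mul_le_mul_of_nonneg_left ?_ (by positivity)
  nlinarith [h2, q1, q2, p1, p2]

end PermExp
section Moments

variable {n : ℕ}

lemma pow_interp {y : ℝ} (hy : 0 ≤ y) {p q s : ℕ} (h1 : p ≤ q) (h2 : q ≤ s) :
    y ^ q ≤ y ^ p + y ^ s := by
  rcases le_total y 1 with h | h
  · have := pow_le_pow_of_le_one hy h h1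
    have := pow_nonneg hy s
    linarith
  · have := pow_le_pow_right₀ h h2
    have := pow_nonneg hy p
    linarith

lemma SS_interp (a : Matrix (Fin n) (Fin n) ℝ) {p q s : ℕ} (h1 : p ≤ q) (h2 : q ≤ s) :
    SS a q ≤ SS a p + SS a s := by
  unfold SS
  rw [← add_div]
  simp only [← Finset.sum_add_distrib]
  gcongr with i _ j _
  exact pow_interp (abs_nonneg _) h1 h2

lemma SS_two {a : Matrix (Fin n) (Fin n) ℝ} (h : Good a) : SS a 2 = 1 - 1 / (n : ℝ) := by
  have hn := h.hn
  have hn' : (n : ℝ) ≠ 0 := by positivity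
  unfold SS
  simp only [sq_abs, h.sq]
  field_simp

lemma SS_two_le {a : Matrix (Fin n) (Fin n) ℝ} (h : Good a) : SS a 2 ≤ 1 := by
  rw [SS_two h]
  have : (0 : ℝ) ≤ 1 / (n : ℝ) := by positivity
  linarith

lemma SS_mul {a : Matrix (Fin n) (Fin n) ℝ} (h : Good a) (d r : ℕ) :
    SS a (d + 2) * SS a (r + 2) ≤ SS a (d + r + 2) := by
  have hn := h.hn
  have hn' : (0 : ℝ) < (n : ℝ) := by positivity
  have e : ∀ p, SS a p = (∑ x : Fin n × Fin n, |a x.1 x.2| ^ p) / (n : ℝ) := by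
    intro p; unfold SS; rw [Fintype.sum_prod_type]
  have key : ∀ u v : ℝ, 0 ≤ u → 0 ≤ v → u ^ (d + 2) * v ^ (r + 2) + v ^ (d + 2) * u ^ (r + 2) ≤
      u ^ (d + r + 2) * v ^ 2 + u ^ 2 * v ^ (d + r + 2) := by
    intro u v hu hv
    have : 0 ≤ (u ^ d - v ^ d) * (u ^ r - v ^ r) := by
      rcases le_total u v with g | g
      · have h1 := pow_le_pow_left₀ hu g d
        have h2 := pow_le_pow_left₀ hu g r
        nlinarith
      · have h1 := pow_le_pow_left₀ hv g d
        have h2 := pow_le_pow_left₀ hv g r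
        nlinarith
    have h3 : 0 ≤ u ^ 2 * v ^ 2 * ((u ^ d - v ^ d) * (u ^ r - v ^ r)) := by positivity
    have h4 : u ^ (d + r + 2) * v ^ 2 + u ^ 2 * v ^ (d + r + 2)
      - (u ^ (d + 2) * v ^ (r + 2) + v ^ (d + 2) * u ^ (r + 2)) =
      u ^ 2 * v ^ 2 * ((u ^ d - v ^ d) * (u ^ r - v ^ r)) := by ring
    linarith
  have sum := Finset.sum_le_sum fun x (_ : x ∈ (Finset.univ : Finset (Fin n × Fin n))) =>
    Finset.sum_le_sum fun y (_ : y ∈ (Finset.univ : Finset (Fin n × Fin n))) =>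
      key _ _ (abs_nonneg (a x.1 x.2)) (abs_nonneg (a y.1 y.2))
  simp only [Finset.sum_add_distrib, ← Finset.mul_sum, ← Finset.sum_mul] at sum
  have h1 : SS a (d + 2) * SS a (r + 2) ≤ SS a (d + r + 2) * SS a 2 := by
    rw [e, e, e, e, div_mul_div_comm, div_mul_div_comm]
    gcongr ?_ / _
    linarith
  have := mul_le_mul_of_nonneg_left (SS_two_le h) (SS_nonneg a (d + r + 2))
  linarith

lemma inv_n_le {a : Matrix (Fin n) (Fin n) ℝ} (h : Good a) : 1 / (n : ℝ) ≤ 8 * SS a 3 := by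
  have hn := h.hn
  have hn2 : (2 : ℝ) ≤ (n : ℝ) := by exact_mod_cast hn
  have hn' : (0 : ℝ) < (n : ℝ) := by positivity
  have key : ∀ y : ℝ, 0 ≤ y → y ^ 2 ≤ 1 / (4 * (n : ℝ) ^ 2) + 2 * n * y ^ 3 := by
    intro y hy
    rcases le_total (2 * n * y) 1 with g | g
    · have : y ^ 2 ≤ 1 / (4 * (n : ℝ) ^ 2) := by
        rw [le_div_iff₀ (by positivity)]
        have : 0 ≤ 2 * n * y := by positivity
        nlinarith
      have : 0 ≤ 2 * n * y ^ 3 := by positivity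
      linarith
    · have : y ^ 2 * 1 ≤ y ^ 2 * (2 * n * y) := by gcongr
      have : 0 ≤ 1 / (4 * (n : ℝ) ^ 2) := by positivity
      nlinarith
  have sum := Finset.sum_le_sum fun i (_ : i ∈ (Finset.univ : Finset (Fin n))) =>
    Finset.sum_le_sum fun j (_ : j ∈ (Finset.univ : Finset (Fin n))) =>
      key _ (abs_nonneg (a i j))
  simp only [Finset.sum_add_distrib, ← Finset.mul_sum, sq_abs, h.sq] at sum
  simp only [Finset.sum_const, Finset.card_univ, Fintype.card_fin, nsmul_eq_mul] at sum
  have e : ∑ i, ∑ j, |a i j| ^ 3 = n * SS a 3 := by unfold SS; field_simp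
  rw [e] at sum
  have e2 : (n : ℝ) * (n * (1 / (4 * (n : ℝ) ^ 2))) = 1 / 4 := by field_simp
  rw [e2] at sum
  rw [div_le_iff₀ hn']
  nlinarith [SS_nonneg a 3]

/-- Lipschitz bound for signed powers -/
lemma signed_lip (s : ℕ) (x d : ℝ) :
    |(x + d) * |x + d| ^ s - x * |x| ^ s| ≤ (s + 1) * |d| * (|x| + |d|) ^ s := by
  induction s with
  | zero => simp
  | succ s ih =>
    have hA : |x + d| ≤ |x| + |d| := abs_add_le _ _
    have e : (x + d) * |x + d| ^ (s + 1) - x * |x| ^ (s + 1) =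
      (|x + d| - |x|) * ((x + d) * |x + d| ^ s) + |x| * ((x + d) * |x + d| ^ s - x * |x| ^ s) := by
      ring
    rw [e]
    have h1 : |(|x + d| - |x|)| ≤ |d| := by
      have := abs_abs_sub_abs_le (x + d) x
      simpa using this
    calc _ ≤ |(|x + d| - |x|)| * |(x + d) * |x + d| ^ s|
          + |x| * |(x + d) * |x + d| ^ s - x * |x| ^ s| := by
          refine (abs_add_le _ _).trans ?_
          rw [abs_mul, abs_mul |x|, abs_abs]
      _ ≤ |d| * ((|x| + |d|) * (|x| + |d|) ^ s) +
          (|x| + |d|) * ((s + 1) * |d| * (|x| + |d|) ^ s) := by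
          rw [abs_mul (x + d), abs_pow, abs_abs]
          gcongr
          linarith [abs_nonneg d]
      _ = _ := by push_cast; ring

lemma pow_lip (m : ℕ) (x d : ℝ) :
    |(x + d) ^ m - x ^ m| ≤ m * |d| * (|x| + |d|) ^ (m - 1) := by
  induction m with
  | zero => simp
  | succ m ih =>
    have e : (x + d) ^ (m + 1) - x ^ (m + 1) = (x + d) ^ m * d + ((x + d) ^ m - x ^ m) * x := by ring
    rw [e]
    have h2 : (m : ℝ) * (|x| + |d|) ^ (m - 1) * |x| ≤ m * (|x| + |d|) ^ m := by
      rcases Nat.eq_zero_or_pos m with rfl | hm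
      · simp
      · obtain ⟨p, rfl⟩ : ∃ p, m = p + 1 := ⟨m - 1, by omega⟩
        rw [Nat.add_sub_cancel, pow_succ, mul_assoc]
        gcongr
        linarith [abs_nonneg d]
    calc _ ≤ |x + d| ^ m * |d| + |(x + d) ^ m - x ^ m| * |x| := by
          refine (abs_add_le _ _).trans ?_
          rw [abs_mul, abs_mul, abs_pow]
      _ ≤ (|x| + |d|) ^ m * |d| + (m * |d| * (|x| + |d|) ^ (m - 1)) * |x| := by
          gcongr
          exact abs_add_le _ _
      _ = (|x| + |d|) ^ m * |d| + |d| * (m * (|x| + |d|) ^ (m - 1) * |x|) := by ring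
      _ ≤ (|x| + |d|) ^ m * |d| + |d| * (m * (|x| + |d|) ^ m) := by gcongr
      _ = _ := by rw [Nat.add_sub_cancel]; push_cast; ring

lemma pow_taylor (m : ℕ) (x d : ℝ) :
    |(x + d) ^ (m + 1) - x ^ (m + 1) - (m + 1) * d * x ^ m| ≤
      (m + 1) ^ 2 * |d| ^ 2 * (|x| + |d|) ^ (m - 1) := by
  induction m with
  | zero => simp; positivity
  | succ m ih =>
    have e : (x + d) ^ (m + 1 + 1) - x ^ (m + 1 + 1) - ((m + 1 : ℕ) + 1) * d * x ^ (m + 1) =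
      x * ((x + d) ^ (m + 1) - x ^ (m + 1) - (m + 1) * d * x ^ m)
        + d * ((x + d) ^ (m + 1) - x ^ (m + 1)) := by push_cast; ring
    rw [e]
    have l := pow_lip (m + 1) x d
    rw [Nat.add_sub_cancel] at l ⊢
    have h2 : |x| * |(x + d) ^ (m + 1) - x ^ (m + 1) - (m + 1) * d * x ^ m| ≤
        (m + 1) ^ 2 * |d| ^ 2 * (|x| + |d|) ^ m := by
      rcases Nat.eq_zero_or_pos m with rfl | hm
      · simp; positivity
      · obtain ⟨p, rfl⟩ : ∃ p, m = p + 1 := ⟨m - 1, by omega⟩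
        rw [Nat.add_sub_cancel] at ih
        calc _ ≤ (|x| + |d|) * (((p + 1 : ℕ) + 1) ^ 2 * |d| ^ 2 * (|x| + |d|) ^ p) := by
              gcongr
              linarith [abs_nonneg d]
          _ = _ := by ring
    calc _ ≤ |x| * |(x + d) ^ (m + 1) - x ^ (m + 1) - (m + 1) * d * x ^ m|
          + |d| * |(x + d) ^ (m + 1) - x ^ (m + 1)| := by
          refine (abs_add_le _ _).trans ?_
          rw [abs_mul, abs_mul]
      _ ≤ (m + 1) ^ 2 * |d| ^ 2 * (|x| + |d|) ^ m
          + |d| * ((m + 1 : ℕ) * |d| * (|x| + |d|) ^ m) := by gcongr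
      _ = ((m + 1) ^ 2 + (m + 1)) * (|d| ^ 2 * (|x| + |d|) ^ m) := by push_cast; ring
      _ ≤ ((m + 1 : ℕ) + 1) ^ 2 * (|d| ^ 2 * (|x| + |d|) ^ m) := by
          gcongr
          push_cast
          nlinarith [(Nat.cast_nonneg m : (0:ℝ) ≤ m)]
      _ = _ := by ring

lemma sum_all_zero {a : Matrix (Fin n) (Fin n) ℝ} (h : Good a) (π : Equiv.Perm (Fin n)) :
    ∑ i, ∑ j, a i (π j) = 0 := by
  rw [sum_perm a π (fun x => x)]
  simp [h.row]

/-- common error bound: if a summand is bounded by `c * R^d * (|T| + R)^r`. -/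
lemma err_le (hn : 2 ≤ n) (a : Matrix (Fin n) (Fin n) ℝ) (d r : ℕ) (c : ℝ) (hc : 0 ≤ c)
    (g : Equiv.Perm (Fin n) → Fin n → Fin n → ℝ)
    (hg : ∀ π i j, |g π i j| ≤ c * RR a π i j ^ d * (|rankT a π| + RR a π i j) ^ r) :
    |permExp (fun π => (∑ i, ∑ j, g π i j) / (n : ℝ))| ≤ c * 2 ^ r * (KK a d r + KK a (d + r) 0) := by
  have hn' : (0 : ℝ) < n := by positivity
  refine (pe_abs _).trans ?_
  unfold KK
  rw [← pe_add, ← pe_mul]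
  refine pe_mono fun π => ?_
  rw [abs_div, abs_of_pos hn', ← add_div, ← mul_div_assoc]
  gcongr ?_ / _
  refine (Finset.abs_sum_le_sum_abs _ _).trans ?_
  rw [← Finset.sum_add_distrib, Finset.mul_sum]
  refine Finset.sum_le_sum fun i _ => ?_
  refine (Finset.abs_sum_le_sum_abs _ _).trans ?_
  rw [← Finset.sum_add_distrib, Finset.mul_sum]
  refine Finset.sum_le_sum fun j _ => ?_
  have hR := RR_nonneg a π i j
  calc _ ≤ c * RR a π i j ^ d * (|rankT a π| + RR a π i j) ^ r := hg π i j
    _ ≤ c * RR a π i j ^ d * (2 ^ r * (|rankT a π| ^ r + RR a π i j ^ r)) := by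
        gcongr
        exact two_pow (abs_nonneg _) hR r
    _ = _ := by rw [pow_add]; ring

lemma x_le_RR (a : Matrix (Fin n) (Fin n) ℝ) (π : Equiv.Perm (Fin n)) (i j : Fin n) :
    |a i (π j)| ≤ RR a π i j ∧ |a i (π i)| ≤ RR a π i j ∧ |a j (π j)| ≤ RR a π i j := by
  unfold RR
  have h1 := abs_nonneg (a j (π i))
  have h2 := abs_nonneg (a i (π i))
  have h3 := abs_nonneg (a j (π j))
  have h4 := abs_nonneg (a i (π j))
  refine ⟨?_, ?_, ?_⟩ <;> linarith

lemma MM_rec {a : Matrix (Fin n) (Fin n) ℝ} (h : Good a) (s : ℕ) :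
    MM a (s + 2) ≤ (s + 1) * 2 ^ s * (KK a 2 s + KK a (2 + s) 0) := by
  have hn := h.hn
  have e1 : MM a (s + 2) =
      permExp (fun π => ∑ i, a i (π i) * (rankT a π * |rankT a π| ^ s)) := by
    unfold MM
    congr 1
    funext π
    rw [← Finset.sum_mul]
    change _ = rankT a π * _
    rw [pow_add, sq_abs]
    ring
  rw [e1, swap1 hn a (fun x t => x * (t * |t| ^ s))]
  have e2 : (fun π => (∑ i, ∑ j, a i (π j) * ((rankT a π + DD a π i j) *
        |rankT a π + DD a π i j| ^ s)) / (n : ℝ)) =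
      (fun π => (∑ i, ∑ j, a i (π j) * ((rankT a π + DD a π i j) *
        |rankT a π + DD a π i j| ^ s - rankT a π * |rankT a π| ^ s)) / (n : ℝ)) := by
    funext π
    simp only [mul_sub, Finset.sum_sub_distrib, ← Finset.sum_mul, sum_all_zero h]
    simp
  rw [e2]
  refine (le_abs_self _).trans (err_le hn a 2 s (s + 1) (by positivity) _ ?_)
  intro π i j
  rw [abs_mul]
  have hR := RR_nonneg a π i j
  calc _ ≤ RR a π i j * ((s + 1) * |DD a π i j| * (|rankT a π| + |DD a π i j|) ^ s) := by
        gcongr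
        · exact (x_le_RR a π i j).1
        · exact signed_lip s _ _
    _ ≤ RR a π i j * ((s + 1) * RR a π i j * (|rankT a π| + RR a π i j) ^ s) := by
        gcongr <;> exact DD_le a π i j
    _ = _ := by ring

/-- Rosenthal type bound -/
lemma MM_bound (r : ℕ) : ∃ C : ℝ, 0 < C ∧ ∀ (n : ℕ) (a : Matrix (Fin n) (Fin n) ℝ), Good a →
    MM a r ≤ C * (1 + if 2 ≤ r then SS a r else 0) := by
  induction r using Nat.strong_induction_on with
  | _ r ih =>
  have step : ∀ s : ℕ, (∃ C : ℝ, 0 < C ∧ ∀ (n : ℕ) (a : Matrix (Fin n) (Fin n) ℝ), Good a →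
    MM a s ≤ C * (1 + if 2 ≤ s then SS a s else 0)) →
    ∃ C : ℝ, 0 < C ∧ ∀ (n : ℕ) (a : Matrix (Fin n) (Fin n) ℝ), Good a →
    MM a (s + 2) ≤ C * (1 + SS a (s + 2)) := by
    rintro s ⟨C, hC, H⟩
    refine ⟨(s + 1) * 2 ^ s * (4 ^ 2 * (2 + 2 * 2 ^ s * (1 + 4 ^ (2 + s) * 4)) * (2 * C + 1)
      + 4 ^ (2 + s) * 4), by positivity, fun n a h => ?_⟩
    have h1 := MM_rec h s
    have h2 := KK_le h.hn a 2 s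
    have h3 := KK_zero h.hn a (2 + s)
    rw [add_comm 2 s] at *
    have p := SS_nonneg a (s + 2)
    have h4 : SS a 2 * MM a s + SS a (s + 2) ≤ (2 * C + 1) * (1 + SS a (s + 2)) := by
      have h5 : MM a s ≤ C * (2 + SS a (s + 2)) := by
        refine (H n a h).trans (mul_le_mul_of_nonneg_left ?_ hC.le)
        split_ifs with hs
        · have := SS_interp a hs (show s ≤ s + 2 by omega)
          linarith [SS_two_le h]
        · linarith
      have h6 : SS a 2 * MM a s ≤ 1 * MM a s := by
        gcongr
        · exact MM_nonneg _ _
        · exact SS_two_le h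
      nlinarith
    calc _ ≤ _ := h1
      _ ≤ (s + 1) * 2 ^ s * (4 ^ 2 * (2 + 2 * 2 ^ s * (1 + 4 ^ (s + 2) * 4)) *
          ((2 * C + 1) * (1 + SS a (s + 2))) + 4 ^ (s + 2) * 4 * (1 + SS a (s + 2))) := by
          gcongr
          · refine h2.trans ?_
            gcongr
          · refine h3.trans ?_
            gcongr
            linarith
      _ = _ := by ring
  have base0 : ∃ C : ℝ, 0 < C ∧ ∀ (n : ℕ) (a : Matrix (Fin n) (Fin n) ℝ), Good a →
    MM a 0 ≤ C * (1 + if 2 ≤ 0 then SS a 0 else 0) := ⟨1, one_pos, fun n a h => by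
      simp [MM, pe_const]⟩
  rcases r with _ | _ | s
  · exact base0
  · obtain ⟨C, hC, H⟩ := step 0 base0
    refine ⟨1 + 2 * C, by positivity, fun n a h => ?_⟩
    have h1 := H n a h
    have h2 : MM a 1 ≤ 1 + MM a 2 := by
      have : MM a 0 = 1 := by simp [MM, pe_const]
      rw [← this]
      unfold MM
      rw [← pe_add]
      exact pe_mono fun π => pow_interp (abs_nonneg _) (by norm_num) (by norm_num)
    have h3 := SS_two_le h
    simp only [zero_add] at *
    norm_num
    nlinarith
  · obtain ⟨C, hC, H⟩ := step s (ih s (by omega))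
    refine ⟨C, hC, fun n a h => ?_⟩
    simpa using H n a h

lemma KK_bound (d r : ℕ) (hd : 3 ≤ d) : ∃ C : ℝ, 0 < C ∧
    ∀ (n : ℕ) (a : Matrix (Fin n) (Fin n) ℝ), Good a →
    KK a d r ≤ C * (SS a 3 + SS a (d + r)) := by
  obtain ⟨C, hC, H⟩ := MM_bound r
  refine ⟨4 ^ d * (2 + 2 * 2 ^ r * (1 + 4 ^ (d + r) * 4)) * (2 * C + 1), by positivity,
    fun n a h => ?_⟩
  refine (KK_le h.hn a d r).trans ?_
  rw [mul_assoc _ (2 * C + 1)]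
  gcongr
  have p3 := SS_nonneg a 3
  have p4 := SS_nonneg a (d + r)
  have h1 := SS_interp a hd (show d ≤ d + r by omega)
  have h2 : SS a d * (if 2 ≤ r then SS a r else 0) ≤ SS a 3 + SS a (d + r) := by
    split_ifs with hr
    · obtain ⟨d', rfl⟩ : ∃ p, d = p + 2 := ⟨d - 2, by omega⟩
      obtain ⟨r', rfl⟩ : ∃ p, r = p + 2 := ⟨r - 2, by omega⟩
      exact (SS_mul h d' r').trans (SS_interp a (by omega) (by omega))
    · simp; positivity
  calc _ ≤ SS a d * (C * (1 + if 2 ≤ r then SS a r else 0)) + SS a (d + r) := by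
        gcongr
        · exact SS_nonneg _ _
        · exact H n a h
    _ = C * (SS a d + SS a d * (if 2 ≤ r then SS a r else 0)) + SS a (d + r) := by ring
    _ ≤ C * ((SS a 3 + SS a (d + r)) + (SS a 3 + SS a (d + r))) + SS a (d + r) := by gcongr
    _ ≤ _ := by nlinarith

end Moments
section Gauss

lemma gauss_integrable (m : ℕ) : Integrable (fun x : ℝ => x ^ m * gaussD x) := by
  have h := integrable_rpow_mul_exp_neg_mul_sq (b := 1 / 2) (by norm_num) (s := (m : ℝ))
    (by have : (0:ℝ) ≤ m := Nat.cast_nonneg m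
        linarith)
  have := h.const_mul (Real.sqrt (2 * Real.pi))⁻¹
  refine this.congr (Filter.Eventually.of_forall fun x => ?_)
  simp only [gaussD, Real.rpow_natCast]
  rw [show -(1 / 2) * x ^ 2 = -(x ^ 2) / 2 by ring]
  ring

lemma gauss_deriv (x : ℝ) : HasDerivAt gaussD (-(x * gaussD x)) x := by
  unfold gaussD
  have h : HasDerivAt (fun x : ℝ => -(x ^ 2) / 2) (-x) x := by
    have := ((hasDerivAt_pow 2 x).neg).div_const 2
    refine this.congr_deriv ?_
    push_cast
    ring
  have := (h.exp).const_mul (Real.sqrt (2 * Real.pi))⁻¹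
  refine this.congr_deriv ?_
  ring

lemma gauss_zero : ∫ x, x ^ 0 * gaussD x = 1 := by
  have := ProbabilityTheory.integral_gaussianPDFReal_eq_one 0 (v := 1) one_ne_zero
  rw [← this]
  congr 1
  funext x
  simp [gaussD, ProbabilityTheory.gaussianPDFReal]

lemma gauss_one : ∫ x, x ^ 1 * gaussD x = 0 := by
  have i0 : Integrable gaussD := by simpa using gauss_integrable 0
  have i1 := gauss_integrable 1
  have := integral_eq_zero_of_hasDerivAt_of_integrable gauss_deriv (by simpa using i1.neg) i0
  rw [integral_neg, neg_eq_zero] at this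
  simpa using this

lemma gauss_rec (m : ℕ) : ∫ x, x ^ (m + 2) * gaussD x = (m + 1) * ∫ x, x ^ m * gaussD x := by
  have hd : ∀ x : ℝ, HasDerivAt (fun x : ℝ => x ^ (m + 1) * gaussD x)
      ((m + 1) * (x ^ m * gaussD x) - x ^ (m + 2) * gaussD x) x := by
    intro x
    have := (hasDerivAt_pow (m + 1) x).mul (gauss_deriv x)
    refine this.congr_deriv ?_
    rw [Nat.add_sub_cancel]
    push_cast
    ring
  have i1 := (gauss_integrable m).const_mul ((m : ℝ) + 1)
  have i2 := gauss_integrable (m + 2)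
  have := integral_eq_zero_of_hasDerivAt_of_integrable hd (i1.sub i2) (gauss_integrable (m + 1))
  rw [integral_sub i1 i2, integral_const_mul] at this
  linarith

end Gauss

section Main

lemma nMM (r w : ℕ) (hr : r ≤ w) : ∃ C : ℝ, 0 < C ∧
    ∀ (n : ℕ) (a : Matrix (Fin n) (Fin n) ℝ), Good a →
    1 / (n : ℝ) * |permExp (fun π => rankT a π ^ r)| ≤ C * (SS a 3 + SS a w) := by
  obtain ⟨C, hC, H⟩ := MM_bound r
  refine ⟨C * 16, by positivity, fun n a h => ?_⟩
  have h1 : |permExp (fun π => rankT a π ^ r)| ≤ MM a r := by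
    refine (pe_abs _).trans (le_of_eq ?_)
    simp only [abs_pow, MM]
  have h2 := H n a h
  have p3 := SS_nonneg a 3
  have pw := SS_nonneg a w
  have h3 : (if 2 ≤ r then SS a r else 0) ≤ 1 + SS a w := by
    split_ifs with g
    · exact (SS_interp a g hr).trans (by linarith [SS_two_le h])
    · positivity
  have hn2 : (2 : ℝ) ≤ (n : ℝ) := by exact_mod_cast h.hn
  have hn : 1 / (n : ℝ) ≤ 1 := by
    rw [div_le_one (by linarith)]
    linarith
  have hn0 : 0 ≤ 1 / (n : ℝ) := by positivity
  have h4 := inv_n_le h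
  calc _ ≤ 1 / (n : ℝ) * (C * (1 + (1 + SS a w))) := by
        gcongr
        refine h1.trans (h2.trans ?_)
        exact mul_le_mul_of_nonneg_left (by linarith) hC.le
    _ = C * (2 * (1 / (n : ℝ)) + 1 / (n : ℝ) * SS a w) := by ring
    _ ≤ C * (2 * (8 * SS a 3) + 1 * SS a w) := by gcongr
    _ ≤ _ := by nlinarith

lemma moment_identity {n : ℕ} {a : Matrix (Fin n) (Fin n) ℝ} (h : Good a) (m : ℕ) :
    permExp (fun π => rankT a π ^ (m + 2)) - (m + 1) * permExp (fun π => rankT a π ^ m) =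
      permExp (fun π => (∑ i, ∑ j, a i (π j) * ((rankT a π + DD a π i j) ^ (m + 1)
        - rankT a π ^ (m + 1) - (m + 1) * DD a π i j * rankT a π ^ m)) / (n : ℝ))
      + (m + 1) * (permExp (fun π => (∑ i, ∑ j, a i (π i) * a j (π j) *
          ((rankT a π + DD a π i j) ^ m - rankT a π ^ m)) / (n : ℝ))
        + 1 / (n : ℝ) * permExp (fun π => rankT a π ^ (m + 2))
        - 1 / (n : ℝ) * permExp (fun π => rankT a π ^ m)) := by
  have hn := h.hn
  have hn' : (n : ℝ) ≠ 0 := by positivity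
  have e1 : permExp (fun π => rankT a π ^ (m + 2)) =
      permExp (fun π => (∑ i, ∑ j, a i (π j) * (rankT a π + DD a π i j) ^ (m + 1)) / (n : ℝ)) := by
    rw [← swap1 hn a (fun x t => x * t ^ (m + 1))]
    congr 1
    funext π
    rw [← Finset.sum_mul]
    change _ = rankT a π * _
    ring
  have e2 := swap2 a (fun u v t => u * v * t ^ m)
  have e3 : ∀ π : Equiv.Perm (Fin n), ∑ i, ∑ j, a i (π j) * DD a π i j =
      ((n : ℝ) - 1) + ∑ i, ∑ j, a i (π j) * a j (π i) := by
    intro π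
    unfold DD
    simp only [mul_sub, mul_add, Finset.sum_sub_distrib, Finset.sum_add_distrib]
    have z1 : ∑ i, ∑ j, a i (π j) * a i (π i) = 0 := by
      refine Finset.sum_eq_zero fun i _ => ?_
      rw [← Finset.sum_mul, Equiv.sum_comp π (fun j => a i j), h.row, zero_mul]
    have z2 : ∑ i, ∑ j, a i (π j) * a j (π j) = 0 := by
      rw [Finset.sum_comm]
      refine Finset.sum_eq_zero fun j _ => ?_
      rw [← Finset.sum_mul, h.col, zero_mul]
    have z3 : ∑ i, ∑ j, a i (π j) * a i (π j) = (n : ℝ) - 1 := by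
      rw [sum_perm a π (fun x => x * x), ← h.sq]
      simp only [sq]
    rw [z1, z2, z3]
    ring
  have e4 : permExp (fun π => (∑ i, ∑ j, a i (π j) * (rankT a π + DD a π i j) ^ (m + 1)) / (n : ℝ))
      = permExp (fun π => (∑ i, ∑ j, a i (π j) * ((rankT a π + DD a π i j) ^ (m + 1)
        - rankT a π ^ (m + 1) - (m + 1) * DD a π i j * rankT a π ^ m)) / (n : ℝ))
      + ((m + 1) * (1 - 1 / (n : ℝ)) * permExp (fun π => rankT a π ^ m) + (m + 1) / (n : ℝ) *
        permExp (fun π => ∑ i, ∑ j, a i (π j) * a j (π i) * rankT a π ^ m)) := by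
    rw [← pe_mul, ← pe_mul, ← pe_add, ← pe_add]
    congr 1
    funext π
    have s1 : ∑ i, ∑ j, a i (π j) * ((rankT a π + DD a π i j) ^ (m + 1)
        - rankT a π ^ (m + 1) - (m + 1) * DD a π i j * rankT a π ^ m) =
        ∑ i, ∑ j, a i (π j) * (rankT a π + DD a π i j) ^ (m + 1)
        - (∑ i, ∑ j, a i (π j)) * rankT a π ^ (m + 1)
        - (m + 1) * rankT a π ^ m * ∑ i, ∑ j, a i (π j) * DD a π i j := by
      simp only [Finset.mul_sum, Finset.sum_mul, ← Finset.sum_sub_distrib]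
      refine Finset.sum_congr rfl fun i _ => Finset.sum_congr rfl fun j _ => ?_
      ring
    rw [s1, sum_all_zero h, e3]
    simp only [← Finset.sum_mul]
    field_simp
    ring
  have e5 : permExp (fun π => ∑ i, ∑ j, a i (π i) * a j (π j) * (rankT a π + DD a π i j) ^ m) =
      (n : ℝ) * permExp (fun π => (∑ i, ∑ j, a i (π i) * a j (π j) *
          ((rankT a π + DD a π i j) ^ m - rankT a π ^ m)) / (n : ℝ))
      + permExp (fun π => rankT a π ^ (m + 2)) := by
    rw [← pe_mul, ← pe_add]
    congr 1
    funext π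
    have s2 : rankT a π ^ (m + 2) = ∑ i, ∑ j, a i (π i) * a j (π j) * rankT a π ^ m := by
      simp only [← Finset.sum_mul, ← Finset.mul_sum]
      change _ = rankT a π * rankT a π * _
      ring
    rw [s2, mul_div_cancel₀ _ hn']
    simp only [← Finset.sum_add_distrib]
    refine Finset.sum_congr rfl fun i _ => Finset.sum_congr rfl fun j _ => ?_
    ring
  have e6 := e1.trans e4
  rw [e2, e5] at e6
  rw [sub_eq_iff_eq_add]
  refine e6.trans ?_
  generalize permExp (fun π => (∑ i, ∑ j, a i (π i) * a j (π j) *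
          ((rankT a π + DD a π i j) ^ m - rankT a π ^ m)) / (n : ℝ)) = q1
  generalize permExp (fun π => (∑ i, ∑ j, a i (π j) * ((rankT a π + DD a π i j) ^ (m + 1)
        - rankT a π ^ (m + 1) - (m + 1) * DD a π i j * rankT a π ^ m)) / (n : ℝ)) = q2
  field_simp
  ring

lemma moment_rec (m : ℕ) : ∃ C : ℝ, 0 < C ∧
    ∀ (n : ℕ) (a : Matrix (Fin n) (Fin n) ℝ), Good a →
    |permExp (fun π => rankT a π ^ (m + 2)) - (m + 1) * permExp (fun π => rankT a π ^ m)| ≤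
      C * (SS a 3 + SS a (3 + (m - 1))) := by
  obtain ⟨C1, hC1, H1⟩ := KK_bound 3 (m - 1) le_rfl
  obtain ⟨C2, hC2, H2⟩ := KK_bound (3 + (m - 1)) 0 (by omega)
  obtain ⟨C3, hC3, H3⟩ := nMM m (3 + (m - 1)) (by omega)
  obtain ⟨C4, hC4, H4⟩ := nMM (m + 2) (3 + (m - 1)) (by omega)
  refine ⟨(m + 1) ^ 2 * 2 ^ (m - 1) * (C1 + C2) +
    (m + 1) * (m * 2 ^ (m - 1) * (C1 + C2) + C4 + C3), by positivity, fun n a h => ?_⟩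
  have hn := h.hn
  rw [moment_identity h m]
  have g1 := err_le hn a 3 (m - 1) ((m + 1) ^ 2) (by positivity)
    (fun π i j => a i (π j) * ((rankT a π + DD a π i j) ^ (m + 1)
        - rankT a π ^ (m + 1) - (m + 1) * DD a π i j * rankT a π ^ m)) (by
      intro π i j
      have hR := RR_nonneg a π i j
      have hD := DD_le a π i j
      rw [abs_mul]
      calc _ ≤ RR a π i j * ((m + 1) ^ 2 * |DD a π i j| ^ 2 *
            (|rankT a π| + |DD a π i j|) ^ (m - 1)) := by
            gcongr
            · exact (x_le_RR a π i j).1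
            · exact pow_taylor m _ _
        _ ≤ RR a π i j * ((m + 1) ^ 2 * RR a π i j ^ 2 *
            (|rankT a π| + RR a π i j) ^ (m - 1)) := by gcongr
        _ = _ := by ring)
  have g2 := err_le hn a 3 (m - 1) (m : ℝ) (by positivity)
    (fun π i j => a i (π i) * a j (π j) *
          ((rankT a π + DD a π i j) ^ m - rankT a π ^ m)) (by
      intro π i j
      have hR := RR_nonneg a π i j
      have hD := DD_le a π i j
      rw [abs_mul, abs_mul]
      calc _ ≤ RR a π i j * RR a π i j * (m * |DD a π i j| *
            (|rankT a π| + |DD a π i j|) ^ (m - 1)) := by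
            gcongr
            · exact (x_le_RR a π i j).2.1
            · exact (x_le_RR a π i j).2.2
            · exact pow_lip m _ _
        _ ≤ RR a π i j * RR a π i j * (m * RR a π i j *
            (|rankT a π| + RR a π i j) ^ (m - 1)) := by gcongr
        _ = _ := by ring)
  have k1 := H1 n a h
  have k2 := H2 n a h
  rw [add_zero] at k2
  have k3 := H3 n a h
  have k4 := H4 n a h
  set W := SS a 3 + SS a (3 + (m - 1)) with hW
  have hK : KK a 3 (m - 1) + KK a (3 + (m - 1)) 0 ≤ (C1 + C2) * W := by linarith
  have hn0 : 0 ≤ 1 / (n : ℝ) := by positivity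
  rw [← abs_of_nonneg hn0, ← abs_mul] at k3 k4
  have f1 := g1.trans (mul_le_mul_of_nonneg_left hK (by positivity))
  have f2 := g2.trans (mul_le_mul_of_nonneg_left hK (by positivity))
  refine (abs_add_le _ _).trans ?_
  rw [add_mul (((m : ℝ) + 1) ^ 2 * 2 ^ (m - 1) * (C1 + C2))]
  refine add_le_add (f1.trans (le_of_eq (by ring))) ?_
  rw [abs_mul, abs_of_nonneg (by positivity : (0:ℝ) ≤ (m:ℝ) + 1), mul_assoc]
  refine mul_le_mul_of_nonneg_left ?_ (by positivity)
  refine (abs_sub _ _).trans ?_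
  have := abs_add_le (permExp (fun π => (∑ i, ∑ j, a i (π i) * a j (π j) *
          ((rankT a π + DD a π i j) ^ m - rankT a π ^ m)) / (n : ℝ)))
        (1 / (n : ℝ) * permExp (fun π => rankT a π ^ (m + 2)))
  linarith

lemma moment_main (k : ℕ) : ∃ C : ℝ, 0 < C ∧
    ∀ (n : ℕ) (a : Matrix (Fin n) (Fin n) ℝ), Good a →
    |permExp (fun π => rankT a π ^ k) - ∫ x, x ^ k * gaussD x| ≤
      C * (SS a 3 + SS a (max k 3)) := by
  induction k using Nat.strong_induction_on with
  | _ k ih =>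
  rcases k with _ | _ | m
  · refine ⟨1, one_pos, fun n a h => ?_⟩
    rw [gauss_zero]
    simp only [pow_zero, pe_const, sub_self, abs_zero]
    have := SS_nonneg a 3
    have := SS_nonneg a (max 0 3)
    positivity
  · refine ⟨1, one_pos, fun n a h => ?_⟩
    have e : permExp (fun π => rankT a π ^ (0 + 1)) = 0 := by
      have := swap1 h.hn a (fun x _ => x)
      simp only [sum_all_zero h, zero_div, pe_const] at this
      simpa [rankT] using this
    rw [e, zero_add, gauss_one]
    have := SS_nonneg a 3
    have := SS_nonneg a (max 1 3)
    simp only [sub_self, abs_zero]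
    positivity
  · obtain ⟨C, hC, H⟩ := ih m (by omega)
    obtain ⟨C', hC', H'⟩ := moment_rec m
    refine ⟨C' + (m + 1) * C * 2, by positivity, fun n a h => ?_⟩
    have h1 := H n a h
    have h2 := H' n a h
    rw [show 3 + (m - 1) = max (m + 2) 3 by omega] at h2
    have h3 := SS_interp a (show 3 ≤ max m 3 by omega) (show max m 3 ≤ max (m + 2) 3 by omega)
    have p := SS_nonneg a (max (m + 2) 3)
    have p3 := SS_nonneg a 3
    rw [gauss_rec, show m + 1 + 1 = m + 2 from rfl]
    have e : permExp (fun π => rankT a π ^ (m + 2)) - (m + 1) * ∫ x, x ^ m * gaussD x =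
      (permExp (fun π => rankT a π ^ (m + 2)) - (m + 1) * permExp (fun π => rankT a π ^ m))
      + (m + 1) * (permExp (fun π => rankT a π ^ m) - ∫ x, x ^ m * gaussD x) := by ring
    rw [e]
    refine (abs_add_le _ _).trans ?_
    rw [add_mul C', abs_mul, abs_of_nonneg (by positivity : (0:ℝ) ≤ (m:ℝ) + 1)]
    refine add_le_add h2 ?_
    calc _ ≤ ((m:ℝ) + 1) * (C * (2 * (SS a 3 + SS a (max (m + 2) 3)))) := by
          gcongr
          refine h1.trans ?_
          gcongr
          linarith
      _ = _ := by ring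

lemma hat_good {n : ℕ} (hn : 2 ≤ n) (A : Matrix (Fin n) (Fin n) ℝ) (hA : 0 < sdev A) :
    Good (hatM A) := by
  have hn' : (n : ℝ) ≠ 0 := by positivity
  have hn2 : (2 : ℝ) ≤ (n : ℝ) := by exact_mod_cast hn
  have hs : sdev A ≠ 0 := hA.ne'
  have r1 : ∑ i, rowMean A i = n * totMean A := by
    unfold rowMean totMean
    rw [← Finset.sum_div]; field_simp
  have r2 : ∑ i, colMean A i = n * totMean A := by
    unfold colMean totMean
    rw [← Finset.sum_div, Finset.sum_comm]; field_simp
  refine ⟨hn, fun i => ?_, fun j => ?_, ?_⟩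
  · unfold hatM ctr
    rw [← Finset.sum_div]
    simp only [Finset.sum_add_distrib, Finset.sum_sub_distrib, r2]
    simp only [rowMean, Finset.sum_const, Finset.card_univ, Fintype.card_fin, nsmul_eq_mul]
    field_simp
    ring
  · unfold hatM ctr
    rw [← Finset.sum_div]
    simp only [Finset.sum_add_distrib, Finset.sum_sub_distrib, r1]
    simp only [colMean, Finset.sum_const, Finset.card_univ, Fintype.card_fin, nsmul_eq_mul]
    field_simp
    ring
  · have hpos : 0 < sigma2 A := Real.sqrt_pos.1 hA
    have hsq : sdev A ^ 2 = sigma2 A := Real.sq_sqrt hpos.le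
    unfold hatM
    simp only [div_pow, ← Finset.sum_div, hsq]
    rw [div_eq_iff hpos.ne']
    unfold sigma2
    have : (n : ℝ) - 1 ≠ 0 := by linarith
    field_simp

lemma hat_rank {n : ℕ} (hn : 2 ≤ n) (A : Matrix (Fin n) (Fin n) ℝ) (π : Equiv.Perm (Fin n)) :
    rankTstd A π = rankT (hatM A) π := by
  have hn' : (n : ℝ) ≠ 0 := by positivity
  have r1 : ∑ i, rowMean A i = n * totMean A := by
    unfold rowMean totMean
    rw [← Finset.sum_div]; field_simp
  have r2 : ∑ i, colMean A (π i) = n * totMean A := by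
    rw [Equiv.sum_comp π (fun i => colMean A i)]
    unfold colMean totMean
    rw [← Finset.sum_div, Finset.sum_comm]; field_simp
  unfold rankTstd rankT hatM ctr muM
  rw [← Finset.sum_div]
  simp only [Finset.sum_add_distrib, Finset.sum_sub_distrib, r1, r2]
  congr 1
  simp

end Main

/-- for every `k ≥ 3` there is a constant `C(k) > 0` such that
`|E(𝒯_A^k) − ∫ x^k ψ| ≤ C(k)(β_A/n + (1/n)Σ|â_{ij}|^k)` for all `A`. -/
theorem rank_statistic_kth_moment_bound (k : ℕ) (hk : 3 ≤ k) :
    ∃ C : ℝ, 0 < C ∧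
      ∀ (n : ℕ), 2 ≤ n → ∀ A : Matrix (Fin n) (Fin n) ℝ, 0 < sdev A →
        |permExp (fun π => rankTstd A π ^ k) - ∫ x, x ^ k * gaussD x| ≤
          C * (betaM A / (n : ℝ) + (∑ i, ∑ j, |hatM A i j| ^ k) / (n : ℝ)) := by
  obtain ⟨C, hC, H⟩ := moment_main k
  refine ⟨C, hC, fun n hn A hA => ?_⟩
  have := H n (hatM A) (hat_good hn A hA)
  rw [max_eq_left hk] at this
  simp only [hat_rank hn A]
  exact this
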